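/- Let q = p^r be a power of a prime p and let F_{q^3} denote the finite field with q^3 elements. The number of triples (u, v, w) ∈ F_{q^3}^3 with (u, v, w) ≠ (0, 0, 0) and u^{q-1} + v^{q-1} + w^{q-1} = 0 equals (q^3 - 1)·N, where N = (2q+2)(q-1)^2 if q ≡ 5 (mod 6); N = (2q+1)(q-1)^2 if q ≡ 0 (mod 3); N = 2q(q-1)^2 if q ≡ 1 (mod 6); N = (2q+2)(q-1)^2 + 3(q-1) if q ≡ 2 (mod 6); and N = 2q(q-1)^2 + 3(q-1) if q ≡ 4 (mod 6). -/

import Mathlib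

/-!
Put `n = q - 1` and `m = q ^ 2 + q + 1`, so that `n * m = q ^ 3 - 1`. Dehomogenizing, and using that
the nonzero `n`-th powers are the elements with `x ^ m = 1`, each having `n` roots, one finds that
the number of projective points is `n ^ 2 * M + 3 * B`: here `B` counts the solutions of
`x ^ n = -1`, one set of them on each coordinate line, and `M` counts the `x` such that both `x` and
`-1 - x` have norm `1` over `𝔽_q`. With `φ` the `q`-Frobenius, this pair of norm equations factors
as `φ x * (x + 1) = -1` or `x * (φ x + 1) = -1`. The involution `x ↦ -1 - x` exchanges the two
conditions. The first one says that `φ` acts on `x` as the Möbius map `x ↦ -1 / (x + 1)`, which has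
order three; hence every root of the polynomial `X ^ q * (X + 1) + 1` is fixed by `φ ^ 3`, and all
`q + 1` of them lie in `𝔽_{q ^ 3}`. The two conditions hold together exactly when
`x ^ 2 + x + 1 = 0`, so `M` is `2 * (q + 1)` minus the number of primitive cube roots of unity in
`𝔽_{q ^ 3}` (or minus `1` in characteristic three).
-/

open Finset Polynomial

section Endomorphism

variable {R : Type*} [CommRing R] (φ : R →+* R) {x : R}

/-- The product of `x` and its first two iterates under an endomorphism `φ`. When `φ` generates the
Galois group of a cubic extension this is the norm. -/
def tripleNorm (x : R) : R := x * φ x * φ (φ x)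

lemma map_neg_one_sub_mul_add_one : φ (-1 - x) * (-1 - x + 1) = x * (φ x + 1) := by
  rw [map_sub, map_neg, map_one]
  ring

variable {φ}

lemma map_map_mul_map_add_one_eq_neg_one (h : φ x * (x + 1) = -1) : φ (φ x) * (φ x + 1) = -1 := by
  simpa using congrArg φ h

lemma tripleNorm_eq_one_of_map_mul_add_one (h : φ x * (x + 1) = -1) : tripleNorm φ x = 1 := by
  unfold tripleNorm
  linear_combination φ (φ x) * h - map_map_mul_map_add_one_eq_neg_one h

lemma map_tripleNorm_eq_one_of_map_mul_add_one (h : φ x * (x + 1) = -1) :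
    φ x * φ (φ x) * φ (φ (φ x)) = 1 :=
  tripleNorm_eq_one_of_map_mul_add_one (map_map_mul_map_add_one_eq_neg_one h)

lemma map_map_map_eq_self_of_map_mul_add_one (h : φ x * (x + 1) = -1) : φ (φ (φ x)) = x := by
  have norm_eq_one : x * φ x * φ (φ x) = 1 := tripleNorm_eq_one_of_map_mul_add_one h
  linear_combination x * map_tripleNorm_eq_one_of_map_mul_add_one h - φ (φ (φ x)) * norm_eq_one

lemma tripleNorm_neg_one_sub_eq_one_of_map_mul_add_one (h : φ x * (x + 1) = -1) :
    tripleNorm φ (-1 - x) = 1 := by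
  have inv_eq : φ x * (-1 - x) = 1 := by linear_combination -h
  have map_inv_eq : φ (φ x) * φ (-1 - x) = 1 := by simpa using congrArg φ inv_eq
  have map_map_inv_eq : φ (φ (φ x)) * φ (φ (-1 - x)) = 1 := by simpa using congrArg φ map_inv_eq
  calc tripleNorm φ (-1 - x)
      = φ x * φ (φ x) * φ (φ (φ x)) * tripleNorm φ (-1 - x) := by
        rw [map_tripleNorm_eq_one_of_map_mul_add_one h, one_mul]
    _ = (φ x * (-1 - x)) * (φ (φ x) * φ (-1 - x)) * (φ (φ (φ x)) * φ (φ (-1 - x))) := by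
        unfold tripleNorm
        ring
    _ = 1 := by rw [inv_eq, map_inv_eq, map_map_inv_eq, one_mul, one_mul]

variable [IsDomain R]

theorem tripleNorm_eq_one_and_tripleNorm_neg_one_sub_eq_one_iff :
    tripleNorm φ x = 1 ∧ tripleNorm φ (-1 - x) = 1 ↔
      φ x * (x + 1) = -1 ∨ x * (φ x + 1) = -1 := by
  constructor
  · rintro ⟨norm_x, norm_y⟩
    have factored : (φ x * (x + 1) + 1) * (x * (φ x + 1) + 1) = 0 := by
      simp only [tripleNorm, map_sub, map_neg, map_one] at norm_x norm_y
      linear_combination -(x * φ x) * norm_y - (1 + x) * (1 + φ x) * norm_x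
    simpa only [mul_eq_zero, add_eq_zero_iff_eq_neg] using factored
  · rintro (h | h)
    · exact ⟨tripleNorm_eq_one_of_map_mul_add_one h,
        tripleNorm_neg_one_sub_eq_one_of_map_mul_add_one h⟩
    · rw [← map_neg_one_sub_mul_add_one] at h
      refine ⟨?_, tripleNorm_eq_one_of_map_mul_add_one h⟩
      simpa using tripleNorm_neg_one_sub_eq_one_of_map_mul_add_one h

-- `φ` permutes the two roots of `X ^ 2 + X + 1`, and a permutation of two points whose cube is
-- trivial is itself trivial.
lemma map_eq_self_of_sq_add_self_add_one_eq_zero (hφ : φ (φ (φ x)) = x)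
    (hx : x ^ 2 + x + 1 = 0) : φ x = x := by
  have map_root : φ x ^ 2 + φ x + 1 = 0 := by simpa using congrArg φ hx
  have factored : (φ x - x) * (φ x - (-1 - x)) = 0 := by linear_combination map_root - hx
  rcases mul_eq_zero.mp factored with fixed | swapped
  · exact sub_eq_zero.mp fixed
  · have map_map : φ (φ x) = x := by
      rw [sub_eq_zero.mp swapped, map_sub, map_neg, map_one, sub_eq_zero.mp swapped]
      ring
    rwa [map_map] at hφ

lemma map_mul_add_one_eq_and_mul_map_add_one_eq_iff (hφ : φ (φ (φ x)) = x) :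
    φ x * (x + 1) = -1 ∧ x * (φ x + 1) = -1 ↔ x ^ 2 + x + 1 = 0 := by
  constructor
  · rintro ⟨h₁, h₂⟩
    have fixed : φ x = x := by linear_combination h₁ - h₂
    rw [fixed] at h₁
    linear_combination h₁
  · intro hx
    rw [map_eq_self_of_sq_add_self_add_one_eq_zero hφ hx, and_self]
    linear_combination hx

end Endomorphism

section Dehomogenization

lemma card_filter_fst_ne_zero_of_smul_invariant {K V : Type*} [GroupWithZero K] [Fintype K]
    [DecidableEq K] [MulAction Kˣ V] [Fintype V] (S : K × V → Prop) [DecidablePred S]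
    (hS : ∀ (c : Kˣ) (t : K × V), S t → S (c • t)) :
    #{t : K × V | t.1 ≠ 0 ∧ S t} = Fintype.card Kˣ * #{v : V | S (1, v)} := by
  rw [← card_univ, ← card_product]
  symm
  refine card_bij (fun s _ ↦ s.1 • ((1 : K), s.2)) ?_ ?_ ?_
  · rintro ⟨c, v⟩ hv
    simp only [mem_product, mem_filter, mem_univ, true_and] at hv ⊢
    exact ⟨by simp [Units.smul_def], hS c _ hv⟩
  · rintro ⟨c, v⟩ - ⟨d, w⟩ - h
    obtain ⟨hcd, hvw⟩ := Prod.ext_iff.mp h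
    obtain rfl : c = d := Units.ext (by simpa [Units.smul_def] using hcd)
    exact Prod.ext rfl (MulAction.injective c hvw)
  · rintro ⟨a, v⟩ ht
    simp only [mem_filter, mem_univ, true_and] at ht
    obtain ⟨ha, ht⟩ := ht
    lift a to Kˣ using isUnit_iff_ne_zero.mpr ha
    refine ⟨(a, a⁻¹ • v), ?_, by simp [Units.smul_def]⟩
    simpa [Units.smul_def] using hS a⁻¹ _ ht

variable {F : Type*} [Field F] [Fintype F] [DecidableEq F] {n : ℕ}

lemma card_fermat_fst_ne_zero (n : ℕ) :
    #{t : F × F × F | t.1 ≠ 0 ∧ t.1 ^ n + t.2.1 ^ n + t.2.2 ^ n = 0} =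
      Fintype.card Fˣ * #{t : F × F | 1 + t.1 ^ n + t.2 ^ n = 0} := by
  rw [card_filter_fst_ne_zero_of_smul_invariant]
  · simp only [one_pow]
  · rintro c ⟨u, v, w⟩ h
    simp only [Prod.smul_mk, Units.smul_def, smul_eq_mul, mul_pow] at h ⊢
    linear_combination (c : F) ^ n * h

lemma card_fermat_fst_eq_zero (hn : n ≠ 0) :
    #{t : F × F × F | t.1 = 0 ∧ t ≠ 0 ∧ t.1 ^ n + t.2.1 ^ n + t.2.2 ^ n = 0} =
      Fintype.card Fˣ * #{x : F | x ^ n = -1} := by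
  have fst_ne_zero {v w : F} (hvw : v = 0 → w ≠ 0) (h : v ^ n + w ^ n = 0) : v ≠ 0 := by
    rintro rfl
    exact hvw rfl (by simpa [hn] using h)
  calc #{t : F × F × F | t.1 = 0 ∧ t ≠ 0 ∧ t.1 ^ n + t.2.1 ^ n + t.2.2 ^ n = 0}
      = #{t : F × F | t.1 ≠ 0 ∧ t.1 ^ n + t.2 ^ n = 0} := by
        symm
        refine card_nbij' (fun t ↦ (0, t)) Prod.snd ?_ ?_ ?_ ?_
        · simp +contextual [Set.MapsTo, hn]
        · simpa +contextual [Set.MapsTo, hn] using fun _ _ _ _ ↦ fst_ne_zero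
        · simp [Set.LeftInvOn]
        · simp +contextual [Set.LeftInvOn, Set.RightInvOn]
    _ = Fintype.card Fˣ * #{x : F | x ^ n = -1} := by
        rw [card_filter_fst_ne_zero_of_smul_invariant]
        · simp only [one_pow, add_comm (1 : F), add_eq_zero_iff_eq_neg]
        · rintro c ⟨v, w⟩ h
          simp only [Prod.smul_mk, Units.smul_def, smul_eq_mul, mul_pow] at h ⊢
          linear_combination (c : F) ^ n * h

lemma card_fermat_eq_card_units_mul (hn : n ≠ 0) :
    #{t : F × F × F | t ≠ 0 ∧ t.1 ^ n + t.2.1 ^ n + t.2.2 ^ n = 0} =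
      Fintype.card Fˣ * (#{t : F × F | 1 + t.1 ^ n + t.2 ^ n = 0} + #{x : F | x ^ n = -1}) := by
  rw [mul_add, ← card_fermat_fst_ne_zero, ← card_fermat_fst_eq_zero hn,
    ← card_filter_add_card_filter_not (fun t : F × F × F ↦ t.1 ≠ 0), filter_filter, filter_filter]
  congr 2 <;> ext ⟨u, v, w⟩ <;> simp only [mem_filter, mem_univ, true_and, not_not]
  · have (hu : u ≠ 0) : (u, v, w) ≠ 0 := fun h ↦ hu (congrArg Prod.fst h)
    tauto
  · tauto

end Dehomogenization

section FiniteField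

lemma card_filter_one_add_pow_add_pow_eq_zero_eq_sum {R : Type*} [Ring R] [Fintype R]
    [DecidableEq R] (n : ℕ) :
    #{t : R × R | 1 + t.1 ^ n + t.2 ^ n = 0} =
      ∑ x : R, #{v : R | v ^ n = x} * #{w : R | w ^ n = -1 - x} := by
  rw [card_eq_sum_card_fiberwise (f := fun t ↦ t.1 ^ n) (t := univ) (fun _ _ ↦ by simp)]
  refine sum_congr rfl fun x _ ↦ ?_
  rw [← card_product]
  congr 1
  ext ⟨v, w⟩
  simp only [mem_filter, mem_univ, true_and, mem_product]
  grind

variable {F : Type*} [Field F] [Fintype F]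

lemma natCast_prime_eq_zero_iff_dvd_card {ℓ : ℕ} (hℓ : ℓ.Prime) :
    (ℓ : F) = 0 ↔ ℓ ∣ Fintype.card F := by
  have : Fact ℓ.Prime := ⟨hℓ⟩
  rw [← prime_dvd_char_iff_dvd_card, ← not_iff_not, ← isUnit_iff_not_dvd_char, isUnit_iff_ne_zero]

lemma not_six_dvd_card : ¬ 6 ∣ Fintype.card F := by
  intro h
  have two_eq_zero : ((2 : ℕ) : F) = 0 :=
    (natCast_prime_eq_zero_iff_dvd_card Nat.prime_two).mpr (dvd_trans (by norm_num) h)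
  have three_eq_zero : ((3 : ℕ) : F) = 0 :=
    (natCast_prime_eq_zero_iff_dvd_card Nat.prime_three).mpr (dvd_trans (by norm_num) h)
  push_cast at two_eq_zero three_eq_zero
  exact one_ne_zero (α := F) (by linear_combination three_eq_zero - two_eq_zero)

variable [DecidableEq F]

lemma card_filter_eval_eq_zero_of_dvd_X_pow_card_sub_X {P : F[X]}
    (hP : P ∣ X ^ Fintype.card F - X) : #{x : F | P.eval x = 0} = P.natDegree := by
  have ne_zero : (X ^ Fintype.card F - X : F[X]) ≠ 0 :=
    FiniteField.X_pow_card_sub_X_ne_zero F Fintype.one_lt_card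
  have splits : (X ^ Fintype.card F - X : F[X]).Splits := by
    rw [splits_iff_card_roots, FiniteField.roots_X_pow_card_sub_X,
      FiniteField.X_pow_card_sub_X_natDegree_eq F Fintype.one_lt_card]
    rfl
  have nodup : P.roots.Nodup := by
    refine Multiset.nodup_of_le (roots.le_of_dvd ne_zero hP) ?_
    rw [FiniteField.roots_X_pow_card_sub_X]
    exact univ.nodup
  have filter_eq : ({x : F | P.eval x = 0} : Finset F) = P.roots.toFinset := by
    ext x
    simp [ne_zero_of_dvd_ne_zero ne_zero hP]
  rw [filter_eq, Multiset.toFinset_card_of_nodup nodup,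
    (splits.of_dvd ne_zero hP).natDegree_eq_card_roots]

section Powers

variable {n m : ℕ}

lemma card_filter_pow_eq (hnm : n * m + 1 = Fintype.card F) (y : F) :
    #{x : F | x ^ n = y} = (if y = 0 then 1 else 0) + (if y ^ m = 1 then n else 0) := by
  have hnm₀ : n * m ≠ 0 := by have := Fintype.one_lt_card (α := F); omega
  have hn : n ≠ 0 := left_ne_zero_of_mul hnm₀
  have hm : m ≠ 0 := right_ne_zero_of_mul hnm₀
  rcases eq_or_ne y 0 with rfl | hy
  · simp [hn, hm, filter_eq']
  rw [if_neg hy, zero_add]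
  split_ifs with hym
  · have dvd : (X ^ n - C y : F[X]) ∣ X ^ Fintype.card F - X :=
      calc (X ^ n - C y : F[X]) ∣ (X ^ n) ^ m - C y ^ m := sub_dvd_pow_sub_pow _ _ _
        _ = X ^ (n * m) - 1 := by rw [← pow_mul, ← C_pow, hym, C_1]
        _ ∣ (X ^ (n * m) - 1) * X := dvd_mul_right _ _
        _ = X ^ Fintype.card F - X := by rw [← hnm]; ring
    simpa [sub_eq_zero] using card_filter_eval_eq_zero_of_dvd_X_pow_card_sub_X dvd
  · rw [card_eq_zero, filter_eq_empty_iff]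
    rintro x - rfl
    have hx : x ≠ 0 := by rintro rfl; exact hy (zero_pow hn)
    refine hym ?_
    rw [← pow_mul, Nat.eq_sub_of_add_eq hnm, FiniteField.pow_card_sub_one_eq_one x hx]

lemma card_filter_one_add_pow_add_pow_eq_zero (hnm : n * m + 1 = Fintype.card F) :
    #{t : F × F | 1 + t.1 ^ n + t.2 ^ n = 0} =
      n ^ 2 * #{x : F | x ^ m = 1 ∧ (-1 - x) ^ m = 1} + 2 * #{x : F | x ^ n = -1} := by
  have left_fiber (x : F) : #{v : F | v ^ n = x} * #{w : F | w ^ n = -1 - x} =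
      (if x = 0 then #{w : F | w ^ n = -1 - x} else 0) +
        if x ^ m = 1 then n * #{w : F | w ^ n = -1 - x} else 0 := by
    rw [card_filter_pow_eq hnm x, add_mul, ite_mul, ite_mul, one_mul, zero_mul]
  have right_fiber (x : F) : #{w : F | w ^ n = -1 - x} =
      (if x = -1 then 1 else 0) + if (-1 - x) ^ m = 1 then n else 0 := by
    simp only [card_filter_pow_eq hnm, sub_eq_zero, eq_comm (a := (-1 : F))]
  calc #{t : F × F | 1 + t.1 ^ n + t.2 ^ n = 0}
      = ∑ x : F, #{v : F | v ^ n = x} * #{w : F | w ^ n = -1 - x} :=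
        card_filter_one_add_pow_add_pow_eq_zero_eq_sum n
    _ = #{w : F | w ^ n = -1} + n * ∑ x : F with x ^ m = 1, #{w : F | w ^ n = -1 - x} := by
        simp [left_fiber, sum_add_distrib, mul_sum, sum_filter]
    _ = #{w : F | w ^ n = -1} + n * ((if (-1 : F) ^ m = 1 then 1 else 0) +
          n * #{x : F | x ^ m = 1 ∧ (-1 - x) ^ m = 1}) := by
        simp [right_fiber, sum_add_distrib, ← sum_filter, filter_filter, mul_comm n]
    _ = n ^ 2 * #{x : F | x ^ m = 1 ∧ (-1 - x) ^ m = 1} + 2 * #{x : F | x ^ n = -1} := by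
        rw [card_filter_pow_eq hnm (-1)]
        split_ifs <;> simp_all <;> ring

theorem card_fermat_of_mul_add_one_eq_card (hnm : n * m + 1 = Fintype.card F) :
    #{t : F × F × F | t ≠ 0 ∧ t.1 ^ n + t.2.1 ^ n + t.2.2 ^ n = 0} =
      (Fintype.card F - 1) *
        (n ^ 2 * #{x : F | x ^ m = 1 ∧ (-1 - x) ^ m = 1} + 3 * #{x : F | x ^ n = -1}) := by
  have hn : n ≠ 0 := by
    rintro rfl
    have := Fintype.one_lt_card (α := F)
    omega
  rw [card_fermat_eq_card_units_mul hn, card_filter_one_add_pow_add_pow_eq_zero hnm,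
    Fintype.card_units]
  ring

lemma card_filter_pow_eq_neg_one_of_odd (hnm : n * m + 1 = Fintype.card F) (hm : Odd m) :
    #{x : F | x ^ n = -1} = if 2 ∣ Fintype.card F then n else 0 := by
  rw [card_filter_pow_eq hnm, if_neg (neg_ne_zero.mpr one_ne_zero), zero_add, hm.neg_one_pow]
  simp only [neg_one_eq_one_iff, FiniteField.even_card_iff_char_two, Nat.dvd_iff_mod_eq_zero]

end Powers

lemma card_filter_sq_add_self_add_one_eq_zero :
    #{x : F | x ^ 2 + x + 1 = 0} =
      if Fintype.card F % 3 = 0 then 1 else if Fintype.card F % 3 = 1 then 2 else 0 := by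
  have three_eq_zero_iff : (3 : F) = 0 ↔ Fintype.card F % 3 = 0 := by
    simpa [Nat.dvd_iff_mod_eq_zero] using
      natCast_prime_eq_zero_iff_dvd_card (F := F) Nat.prime_three
  split_ifs with card_mod_zero card_mod_one
  · have three_eq_zero : (3 : F) = 0 := three_eq_zero_iff.mpr card_mod_zero
    have root_iff (x : F) : x ^ 2 + x + 1 = 0 ↔ x = 1 := by
      have sq_eq : x ^ 2 + x + 1 = (x - 1) ^ 2 := by linear_combination x * three_eq_zero
      rw [sq_eq, sq_eq_zero_iff, sub_eq_zero]
    simp [root_iff, filter_eq']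
  · have dvd : (X ^ 2 + X + 1 : F[X]) ∣ X ^ Fintype.card F - X :=
      calc (X ^ 2 + X + 1 : F[X]) ∣ X ^ 3 - 1 := ⟨X - 1, by ring⟩
        _ ∣ (X ^ 3) ^ (Fintype.card F / 3) - 1 := by
          simpa using sub_dvd_pow_sub_pow (X ^ 3 : F[X]) 1 (Fintype.card F / 3)
        _ ∣ ((X ^ 3) ^ (Fintype.card F / 3) - 1) * X := dvd_mul_right _ _
        _ = X ^ (3 * (Fintype.card F / 3) + 1) - X := by rw [← pow_mul]; ring
        _ = X ^ Fintype.card F - X := by rw [← card_mod_one, Nat.div_add_mod]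
    have degree : (X ^ 2 + X + 1 : F[X]).natDegree = 2 := by compute_degree!
    simpa [degree] using card_filter_eval_eq_zero_of_dvd_X_pow_card_sub_X dvd
  · rw [card_eq_zero, filter_eq_empty_iff]
    rintro x - hx
    have card_mod_two : Fintype.card F % 3 = 2 := by omega
    have cube_eq_one : x ^ 3 = 1 := by linear_combination (x - 1) * hx
    have sq_eq_self : x ^ 2 = x := by
      conv_rhs => rw [← FiniteField.pow_card x, ← Nat.div_add_mod (Fintype.card F) 3, card_mod_two,
        pow_add, pow_mul, cube_eq_one, one_pow, one_mul]
    have x_eq_one : x = 1 := by linear_combination cube_eq_one - (x + 1) * sq_eq_self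
    subst x_eq_one
    exact card_mod_zero (three_eq_zero_iff.mp (by linear_combination hx))

end FiniteField

section CubicExtension

variable {p : ℕ} [Fact p.Prime]

lemma natDegree_X_pow_mul_X_add_one_add_one {K : Type*} [Semiring K] [Nontrivial K] (n : ℕ) :
    (X ^ n * (X + 1) + 1 : K[X]).natDegree = n + 1 := by
  compute_degree!

lemma X_pow_mul_X_add_one_add_one_dvd_X_pow_sub_X {K : Type*} [Field K] [CharP K p] (r : ℕ) :
    (X ^ p ^ r * (X + 1) + 1 : K[X]) ∣ X ^ (p ^ r) ^ 3 - X := by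
  set P : K[X] := X ^ p ^ r * (X + 1) + 1 with hP
  have degree_ne_zero : P.degree ≠ 0 := by
    refine (natDegree_pos_iff_degree_pos.mp ?_).ne'
    rw [hP, natDegree_X_pow_mul_X_add_one_add_one]
    exact Nat.succ_pos _
  have : CharP (AdjoinRoot P) p :=
    charP_of_injective_algebraMap (AdjoinRoot.of.injective_of_degree_ne_zero degree_ne_zero) p
  let φ := iterateFrobenius (AdjoinRoot P) p r
  have root_eq : φ (AdjoinRoot.root P) * (AdjoinRoot.root P + 1) = -1 := by
    simpa [hP, φ, iterateFrobenius_def, add_eq_zero_iff_eq_neg] using AdjoinRoot.eval₂_root P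
  have root_pow : AdjoinRoot.root P ^ (p ^ r) ^ 3 = AdjoinRoot.root P := by
    simpa only [φ, iterateFrobenius_def, ← pow_mul, pow_three'] using
      map_map_map_eq_self_of_map_mul_add_one root_eq
  rw [← AdjoinRoot.mk_eq_zero, map_sub, map_pow, AdjoinRoot.mk_X, root_pow, sub_self]

variable {F : Type*} [Field F] [Fintype F] [DecidableEq F] [CharP F p] {r : ℕ}

lemma card_filter_pow_mul_add_one_eq_neg_one (hF : Fintype.card F = (p ^ r) ^ 3) :
    #{x : F | x ^ p ^ r * (x + 1) = -1} = p ^ r + 1 := by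
  have dvd := X_pow_mul_X_add_one_add_one_dvd_X_pow_sub_X (p := p) (K := F) r
  rw [← hF] at dvd
  simpa [natDegree_X_pow_mul_X_add_one_add_one, add_eq_zero_iff_eq_neg] using
    card_filter_eval_eq_zero_of_dvd_X_pow_card_sub_X dvd

lemma card_filter_mul_pow_add_one_eq_neg_one (hF : Fintype.card F = (p ^ r) ^ 3) :
    #{x : F | x * (x ^ p ^ r + 1) = -1} = p ^ r + 1 := by
  rw [← card_filter_pow_mul_add_one_eq_neg_one hF]
  refine card_equiv (Equiv.subLeft (-1)) fun x ↦ ?_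
  have := map_neg_one_sub_mul_add_one (iterateFrobenius F p r) (x := x)
  simp only [iterateFrobenius_def] at this
  simp only [mem_filter, mem_univ, true_and, Equiv.subLeft_apply, this]

theorem card_filter_pow_eq_one_and_neg_one_sub_pow_eq_one_add
    (hF : Fintype.card F = (p ^ r) ^ 3) :
    #{x : F | x ^ ((p ^ r) ^ 2 + p ^ r + 1) = 1 ∧ (-1 - x) ^ ((p ^ r) ^ 2 + p ^ r + 1) = 1} +
      #{x : F | x ^ 2 + x + 1 = 0} = 2 * (p ^ r + 1) := by
  let φ := iterateFrobenius F p r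
  have pow_eq_norm (x : F) : x ^ ((p ^ r) ^ 2 + p ^ r + 1) = tripleNorm φ x := by
    simp only [tripleNorm, φ, iterateFrobenius_def]
    ring
  have map_map_map (x : F) : φ (φ (φ x)) = x := by
    simp only [φ, iterateFrobenius_def, ← pow_mul]
    convert FiniteField.pow_card x using 2
    rw [hF]
    ring
  simp only [pow_eq_norm, tripleNorm_eq_one_and_tripleNorm_neg_one_sub_eq_one_iff,
    ← map_mul_add_one_eq_and_mul_map_add_one_eq_iff (map_map_map _), filter_or, filter_and]
  have card_left : #{x : F | φ x * (x + 1) = -1} = p ^ r + 1 :=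
    card_filter_pow_mul_add_one_eq_neg_one hF
  have card_right : #{x : F | x * (φ x + 1) = -1} = p ^ r + 1 :=
    card_filter_mul_pow_add_one_eq_neg_one hF
  rw [card_union_add_card_inter, card_left, card_right, two_mul]

end CubicExtension

lemma sub_one_mul_sq_add_self_add_one_add_one {q : ℕ} (hq : 1 ≤ q) :
    (q - 1) * (q ^ 2 + q + 1) + 1 = q ^ 3 := by
  zify [hq]
  ring

lemma odd_sq_add_self_add_one (q : ℕ) : Odd (q ^ 2 + q + 1) := by
  rw [sq, ← Nat.mul_succ]
  exact (Nat.even_mul_succ_self q).add_one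

lemma pow_three_mod_three (q : ℕ) : q ^ 3 % 3 = q % 3 := by
  rw [Nat.pow_mod]
  have := Nat.mod_lt q three_pos
  interval_cases q % 3 <;> rfl

lemma fermat_count_eq_ite_mod_six {q M : ℕ} (hq : ¬ 6 ∣ q)
    (hM : M + (if q % 3 = 0 then 1 else if q % 3 = 1 then 2 else 0) = 2 * (q + 1)) :
    (q - 1) ^ 2 * M + 3 * (if 2 ∣ q then q - 1 else 0) =
      if q % 6 = 5 then (2 * q + 2) * (q - 1) ^ 2
      else if q % 3 = 0 then (2 * q + 1) * (q - 1) ^ 2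
      else if q % 6 = 1 then 2 * q * (q - 1) ^ 2
      else if q % 6 = 2 then (2 * q + 2) * (q - 1) ^ 2 + 3 * (q - 1)
      else 2 * q * (q - 1) ^ 2 + 3 * (q - 1) := by
  have M_eq : M = if q % 3 = 0 then 2 * q + 1 else if q % 3 = 1 then 2 * q else 2 * q + 2 := by
    split_ifs at hM ⊢ <;> omega
  rw [M_eq]
  split_ifs <;> first | omega | ring

theorem fermat_curve_Fq3_count {p r : ℕ} (hp : p.Prime) (hr : 0 < r) {q : ℕ} (hq : q = p ^ r)
    {F : Type*} [Field F] [Fintype F] (hF : Fintype.card F = q ^ 3) :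
    Nat.card {t : F × F × F //
        t ≠ 0 ∧ t.1 ^ (q - 1) + t.2.1 ^ (q - 1) + t.2.2 ^ (q - 1) = 0} =
      (q ^ 3 - 1) *
        (if q % 6 = 5 then (2 * q + 2) * (q - 1) ^ 2
         else if q % 3 = 0 then (2 * q + 1) * (q - 1) ^ 2
         else if q % 6 = 1 then 2 * q * (q - 1) ^ 2
         else if q % 6 = 2 then (2 * q + 2) * (q - 1) ^ 2 + 3 * (q - 1)
         else 2 * q * (q - 1) ^ 2 + 3 * (q - 1)) := by
  have : DecidableEq F := Classical.decEq F
  have : Fact p.Prime := ⟨hp⟩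
  have : CharP F p := charP_of_card_eq_prime_pow (f := r * 3) (by rw [hF, hq, pow_mul])
  have hnm : (q - 1) * (q ^ 2 + q + 1) + 1 = Fintype.card F := by
    rw [hF, sub_one_mul_sq_add_self_add_one_add_one (hq ▸ Nat.one_le_pow _ _ hp.pos)]
  have six_not_dvd : ¬ 6 ∣ q := fun h ↦
    not_six_dvd_card (F := F) (hF ▸ h.trans (dvd_pow_self q three_ne_zero))
  have norm_one_count := card_filter_pow_eq_one_and_neg_one_sub_pow_eq_one_add (hq ▸ hF)
  rw [card_filter_sq_add_self_add_one_eq_zero, ← hq, hF, pow_three_mod_three] at norm_one_count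
  rw [Nat.card_eq_fintype_card, Fintype.card_subtype, card_fermat_of_mul_add_one_eq_card hnm,
    card_filter_pow_eq_neg_one_of_odd hnm (odd_sq_add_self_add_one q), hF,
    ← fermat_count_eq_ite_mod_six six_not_dvd norm_one_count]
  simp only [Nat.prime_two.prime.dvd_pow_iff_dvd three_ne_zero]
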